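/- arXiv:1704.08481 — 2 statements merged into one kernel-verified Lean document; each statement's English description precedes it below -/
import Mathlib

section
/- Let F = [A,B] be a face of the standard n-cube of dimension at least 2, and let φ be an outmap. Then φ is a PUSO of F if and only if both of the following hold: (i) (φ(U) ∆ φ(V)) ∩ (U ∆ V) ≠ ∅ for all pairs of distinct vertices U, V ∈ [A,B] that are not antipodal in [A,B], and (ii) (φ(U) ∆ φ(V)) ∩ (U ∆ V) = ∅ for all pairs of vertices U, V ∈ [A,B] that are antipodal in [A,B]. -/
/-!
The argument rests on one operation: replacing `φ` by `V ↦ φ V ∆ R`, i.e. reversing all edges whose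
direction lies in `R`. If both facets of a face in direction `i` have unique sinks, then the face has
a unique sink iff exactly one of these two sinks has its `i`-edge incoming; this is unaffected by
reversing direction `i` (`HasUniqueSink.flip_singleton`). Hence being a PUSO is invariant under
reversing any set of directions (`IsPUSO.flip`).

Given a PUSO and a vertex `U`, reverse the directions in `φ U`: now `U` is a sink of `[A,B]`. If `V`
is distinct from and not antipodal to `U` and the pair evaluation failed, then `U` and `V` would be
two sinks of the proper face `[U ∩ V, U ∪ V]`, which is impossible; this is (i). Since `[A,B]` has a
second sink `W`, the same reasoning shows that `W` is the antipode of `U`, which is (ii).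

Conversely, (i) makes `V ↦ φ V ∩ C` injective on each proper face of carrier `C`, hence bijective onto
the subsets of `C` by counting, so exactly one vertex is sent to `∅`; and (ii) makes
the antipode of any sink of `[A,B]` another sink.
-/

open Finset
open scoped symmDiff

/-- `V` is a sink of the face `[A,B]` of the standard cube (vertices are subsets
of `{1,…,n}`) under the outmap `φ`: `V` belongs to the face and `φ V` has no
coordinate in the carrier `B \ A`. -/
def IsSink (φ : Finset ℕ → Finset ℕ) (A B V : Finset ℕ) : Prop :=
  A ⊆ V ∧ V ⊆ B ∧ φ V ∩ (B \ A) = ∅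

/-- The face `[A,B]` has exactly one sink under `φ`. -/
def HasUniqueSink (φ : Finset ℕ → Finset ℕ) (A B : Finset ℕ) : Prop :=
  ∃! V, IsSink φ A B V

/-- `φ` is a USO of the face `[A,B]`: every face contained in `[A,B]`
(including `[A,B]` itself) has exactly one sink under `φ`. -/
def IsUSO (φ : Finset ℕ → Finset ℕ) (A B : Finset ℕ) : Prop :=
  A ⊆ B ∧ ∀ A' B' : Finset ℕ, A ⊆ A' → A' ⊆ B' → B' ⊆ B → HasUniqueSink φ A' B'

/-- `φ` is a PUSO of the face `[A,B]`: `[A,B]` does not have exactly one sink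
under `φ`, but every proper face contained in `[A,B]` has exactly one sink. -/
def IsPUSO (φ : Finset ℕ → Finset ℕ) (A B : Finset ℕ) : Prop :=
  A ⊆ B ∧ ¬ HasUniqueSink φ A B ∧
    ∀ A' B' : Finset ℕ, A ⊆ A' → A' ⊆ B' → B' ⊆ B → ¬(A' = A ∧ B' = B) →
      HasUniqueSink φ A' B'

lemma isSink_iff {φ : Finset ℕ → Finset ℕ} {A B V : Finset ℕ} :
    IsSink φ A B V ↔ A ⊆ V ∧ V ⊆ B ∧ ∀ j ∈ B, j ∉ A → j ∉ φ V := by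
  unfold IsSink
  simp only [Finset.eq_empty_iff_forall_notMem, Finset.mem_inter, Finset.mem_sdiff]
  grind

/-- The outmap obtained from `φ` by reversing all edges whose direction lies in `R`. -/
def flipDirs (φ : Finset ℕ → Finset ℕ) (R : Finset ℕ) : Finset ℕ → Finset ℕ := fun V => φ V ∆ R

lemma mem_flipDirs {φ : Finset ℕ → Finset ℕ} {R V : Finset ℕ} {j : ℕ} :
    j ∈ flipDirs φ R V ↔ (j ∈ φ V ∧ j ∉ R) ∨ (j ∈ R ∧ j ∉ φ V) := by
  simp [flipDirs, Finset.mem_symmDiff]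

lemma flipDirs_flipDirs (φ : Finset ℕ → Finset ℕ) (R : Finset ℕ) :
    flipDirs (flipDirs φ R) R = φ := by
  funext V
  simp [flipDirs]

lemma isSink_flip_of_notMem {φ : Finset ℕ → Finset ℕ} {A B : Finset ℕ} {i : ℕ}
    (hi : i ∉ B \ A) (V : Finset ℕ) : IsSink (flipDirs φ {i}) A B V ↔ IsSink φ A B V := by
  simp only [isSink_iff, mem_flipDirs]
  grind

lemma hasUniqueSink_flip_of_notMem {φ : Finset ℕ → Finset ℕ} {A B : Finset ℕ} {i : ℕ}
    (hi : i ∉ B \ A) : HasUniqueSink (flipDirs φ {i}) A B ↔ HasUniqueSink φ A B := by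
  simp only [HasUniqueSink, isSink_flip_of_notMem hi]

/-- The unique sink of the face is the sink of one of its two facets in direction `i`; once
direction `i` is reversed, the sink of the other facet takes over. -/
lemma HasUniqueSink.flip_singleton {φ : Finset ℕ → Finset ℕ} {A B : Finset ℕ} {i : ℕ}
    (hi : i ∈ B \ A) (h0 : HasUniqueSink φ A (B.erase i)) (h1 : HasUniqueSink φ (insert i A) B)
    (h : HasUniqueSink φ A B) : HasUniqueSink (flipDirs φ {i}) A B := by
  obtain ⟨s, hs, us⟩ := h
  obtain ⟨s0, hs0, us0⟩ := h0
  obtain ⟨s1, hs1, us1⟩ := h1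
  simp only [isSink_iff] at hs us hs0 us0 hs1 us1
  have hi' := Finset.mem_sdiff.1 hi
  have key0 : ∀ t, A ⊆ t → t ⊆ B → i ∉ t → (∀ j ∈ B, j ∉ A → j ≠ i → j ∉ φ t) → t = s0 := by
    intro t h1 h2 h3 h4
    exact us0 t ⟨h1, by grind, by grind⟩
  have key1 : ∀ t, A ⊆ t → t ⊆ B → i ∈ t → (∀ j ∈ B, j ∉ A → j ≠ i → j ∉ φ t) → t = s1 := by
    intro t h1 h2 h3 h4
    exact us1 t ⟨by grind, h2, by grind⟩
  have hA0 : A ⊆ s0 ∧ s0 ⊆ B ∧ i ∉ s0 ∧ ∀ j ∈ B, j ∉ A → j ≠ i → j ∉ φ s0 := by grind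
  have hA1 : A ⊆ s1 ∧ s1 ⊆ B ∧ i ∈ s1 ∧ ∀ j ∈ B, j ∉ A → j ≠ i → j ∉ φ s1 := by grind
  have hflip : ∀ t, IsSink (flipDirs φ {i}) A B t ↔
      A ⊆ t ∧ t ⊆ B ∧ i ∈ φ t ∧ ∀ j ∈ B, j ∉ A → j ≠ i → j ∉ φ t := by
    intro t
    simp only [isSink_iff, mem_flipDirs]
    grind
  simp only [HasUniqueSink, hflip]
  have hsi : i ∉ φ s := hs.2.2 i hi'.1 hi'.2
  by_cases his : i ∈ s
  · have e : s = s1 := key1 s hs.1 hs.2.1 his (by grind)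
    have hi0 : i ∈ φ s0 := by
      by_contra hc
      have : s0 = s := us s0 ⟨hA0.1, hA0.2.1, by grind⟩
      grind
    refine ⟨s0, ⟨hA0.1, hA0.2.1, hi0, hA0.2.2.2⟩, ?_⟩
    rintro t ⟨t1, t2, t3, t4⟩
    by_cases hit : i ∈ t
    · have := key1 t t1 t2 hit t4
      grind
    · exact key0 t t1 t2 hit t4
  · have e : s = s0 := key0 s hs.1 hs.2.1 his (by grind)
    have hi1 : i ∈ φ s1 := by
      by_contra hc
      have : s1 = s := us s1 ⟨hA1.1, hA1.2.1, by grind⟩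
      grind
    refine ⟨s1, ⟨hA1.1, hA1.2.1, hi1, hA1.2.2.2⟩, ?_⟩
    rintro t ⟨t1, t2, t3, t4⟩
    by_cases hit : i ∈ t
    · exact key1 t t1 t2 hit t4
    · have := key0 t t1 t2 hit t4
      grind

lemma IsPUSO.flip_singleton {φ : Finset ℕ → Finset ℕ} {A B : Finset ℕ} (h : IsPUSO φ A B)
    (i : ℕ) : IsPUSO (flipDirs φ {i}) A B := by
  obtain ⟨hAB, hn, hp⟩ := h
  refine ⟨hAB, ?_, ?_⟩
  · intro hc
    by_cases hi : i ∈ B \ A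
    · have hi' := Finset.mem_sdiff.1 hi
      -- Reversing direction `i` again would produce a unique sink for `φ` itself.
      have := HasUniqueSink.flip_singleton hi
        ((hasUniqueSink_flip_of_notMem (by simp)).2 (hp A (B.erase i) (by grind) (by grind)
          (by grind) (by grind)))
        ((hasUniqueSink_flip_of_notMem (by simp)).2 (hp (insert i A) B (by grind) (by grind)
          (by grind) (by grind))) hc
      rw [flipDirs_flipDirs] at this
      exact hn this
    · exact hn ((hasUniqueSink_flip_of_notMem hi).1 hc)
  · intro A' B' h1 h2 h3 h4
    by_cases hi : i ∈ B' \ A'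
    · have hi' := Finset.mem_sdiff.1 hi
      exact HasUniqueSink.flip_singleton hi
        (hp A' (B'.erase i) (by grind) (by grind) (by grind) (by grind))
        (hp (insert i A') B' (by grind) (by grind) (by grind) (by grind))
        (hp A' B' h1 h2 h3 h4)
    · exact (hasUniqueSink_flip_of_notMem hi).2 (hp A' B' h1 h2 h3 h4)

lemma IsPUSO.flip {φ : Finset ℕ → Finset ℕ} {A B : Finset ℕ} (h : IsPUSO φ A B)
    (R : Finset ℕ) : IsPUSO (flipDirs φ R) A B := by
  induction R using Finset.induction_on with
  | empty =>
    have : flipDirs φ ∅ = φ := by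
      funext V
      ext j
      simp [mem_flipDirs]
    rwa [this]
  | insert i R hi ih =>
    have : flipDirs φ (insert i R) = flipDirs (flipDirs φ R) {i} := by
      funext V
      ext j
      simp only [mem_flipDirs]
      grind
    rw [this]
    exact ih.flip_singleton i

/-- Two distinct vertices that are both sinks of the face they span must be antipodal
in a PUSO, since otherwise that face is proper. -/
lemma IsPUSO.antipodal {φ : Finset ℕ → Finset ℕ} {A B U V : Finset ℕ} (h : IsPUSO φ A B)
    (hU : A ⊆ U ∧ U ⊆ B) (hV : A ⊆ V ∧ V ⊆ B) (hne : U ≠ V)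
    (sU : ∀ j ∈ U ∆ V, j ∉ φ U) (sV : ∀ j ∈ U ∆ V, j ∉ φ V) : U ∆ V = B \ A := by
  by_contra hc
  have hpr : ¬(U ∩ V = A ∧ U ∪ V = B) := by
    rintro ⟨rfl, rfl⟩
    exact hc (by ext j; simp only [Finset.mem_symmDiff]; grind)
  simp only [Finset.mem_symmDiff] at sU sV
  have hu := h.2.2 (U ∩ V) (U ∪ V) (by grind) (by grind) (by grind) hpr
  exact hne (hu.unique (isSink_iff.2 ⟨by grind, by grind, by grind⟩)
    (isSink_iff.2 ⟨by grind, by grind, by grind⟩))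

/-- If the pair evaluation succeeds on all pairs of distinct vertices of a face with carrier `C`,
then `V ↦ φ V ∩ C` is a bijection from the face onto the subsets of `C`, so the face has
a unique sink. -/
lemma hasUniqueSink_of_pairs {φ : Finset ℕ → Finset ℕ} {A B : Finset ℕ} (hAB : A ⊆ B)
    (h : ∀ U V : Finset ℕ, A ⊆ U → U ⊆ B → A ⊆ V → V ⊆ B → U ≠ V →
      (φ U ∆ φ V) ∩ (U ∆ V) ≠ ∅) : HasUniqueSink φ A B := by
  have hinj : Set.InjOn (fun V => φ V ∩ (B \ A)) (Finset.Icc A B : Finset (Finset ℕ)) := by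
    intro U hU V hV hUV
    simp only [Finset.coe_Icc, Set.mem_Icc] at hU hV
    by_contra hne
    refine h U V hU.1 hU.2 hV.1 hV.2 hne ?_
    rw [Finset.eq_empty_iff_forall_notMem]
    intro j hj
    have hj' := Finset.ext_iff.1 hUV j
    simp only [Finset.mem_inter, Finset.mem_symmDiff, Finset.mem_sdiff] at hj hj'
    grind
  have hmaps : Set.MapsTo (fun V => φ V ∩ (B \ A)) (Finset.Icc A B : Finset (Finset ℕ))
      ((B \ A).powerset : Finset (Finset ℕ)) := by
    intro V _
    simp
  have hsurj := Finset.surjOn_of_injOn_of_card_le _ hmaps hinj (by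
    rw [Finset.card_powerset, Finset.card_Icc_finset hAB, Finset.card_sdiff_of_subset hAB])
  obtain ⟨V, hV, hV0⟩ := hsurj (show (∅ : Finset ℕ) ∈ _ by simp)
  have hV' := Finset.mem_Icc.1 (Finset.mem_coe.1 hV)
  refine ⟨V, ⟨hV'.1, hV'.2, hV0⟩, ?_⟩
  rintro W ⟨w1, w2, w3⟩
  exact hinj (Finset.mem_coe.2 (Finset.mem_Icc.2 ⟨w1, w2⟩)) hV (w3.trans hV0.symm)

/-- PUSO characterization: `φ` is a PUSO of a face `[A,B]` of dimension at
least 2 iff the pair evaluation succeeds on every pair of distinct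
non-antipodal vertices and fails on every pair of antipodal vertices. -/
theorem puso_characterization (n : ℕ) (φ : Finset ℕ → Finset ℕ) (A B : Finset ℕ)
    (hAB : A ⊆ B) (hB : B ⊆ Finset.Icc 1 n) (hdim : 2 ≤ (B \ A).card) :
    IsPUSO φ A B ↔
      ((∀ U V : Finset ℕ, A ⊆ U → U ⊆ B → A ⊆ V → V ⊆ B → U ≠ V →
          U ∆ V ≠ B \ A → (φ U ∆ φ V) ∩ (U ∆ V) ≠ ∅) ∧
        (∀ U V : Finset ℕ, A ⊆ U → U ⊆ B → A ⊆ V → V ⊆ B →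
          U ∆ V = B \ A → (φ U ∆ φ V) ∩ (U ∆ V) = ∅)) := by
  constructor
  · intro h
    refine ⟨?_, ?_⟩
    · intro U V hU hU' hV hV' hne hna he
      rw [Finset.eq_empty_iff_forall_notMem] at he
      simp only [Finset.mem_inter] at he
      refine hna ((h.flip (φ U)).antipodal ⟨hU, hU'⟩ ⟨hV, hV'⟩ hne ?_ ?_)
      · intro j _
        rw [mem_flipDirs]
        grind
      · intro j hj
        have := he j
        rw [Finset.mem_symmDiff] at this
        rw [mem_flipDirs]
        tauto
    · intro U V hU hU' hV hV' ha
      have hf := h.flip (φ U)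
      have hsU : IsSink (flipDirs φ (φ U)) A B U :=
        isSink_iff.2 ⟨hU, hU', by intro j _ _; rw [mem_flipDirs]; tauto⟩
      -- `U` is a sink of `[A,B]` but not the only one.
      obtain ⟨W, hW, hWU⟩ : ∃ W, IsSink (flipDirs φ (φ U)) A B W ∧ W ≠ U := by
        by_contra! hc
        exact hf.2.1 ⟨U, hsU, hc⟩
      have hW' := isSink_iff.1 hW
      have hsU' := isSink_iff.1 hsU
      have haW : U ∆ W = B \ A := hf.antipodal ⟨hU, hU'⟩ ⟨hW'.1, hW'.2.1⟩ hWU.symm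
        (by intro j hj; rw [Finset.mem_symmDiff] at hj; grind)
        (by intro j hj; rw [Finset.mem_symmDiff] at hj; grind)
      obtain rfl : V = W := symmDiff_right_injective U (ha.trans haW.symm)
      rw [ha, symmDiff_comm]
      exact hW.2.2
  · rintro ⟨h1, h2⟩
    refine ⟨hAB, ?_, ?_⟩
    · rintro ⟨V, ⟨hV, hV', hs⟩, hu⟩
      -- The antipode `V ∆ (B \ A)` of the sink `V` is a second sink.
      have ha : V ∆ (V ∆ (B \ A)) = B \ A := symmDiff_symmDiff_cancel_left _ _
      have hW : A ⊆ V ∆ (B \ A) := by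
        intro j hj
        rw [Finset.mem_symmDiff]
        grind
      have hW' : V ∆ (B \ A) ⊆ B := by
        intro j hj
        rw [Finset.mem_symmDiff] at hj
        grind
      have he := h2 V _ hV hV' hW hW' ha
      rw [ha] at he
      have hsW : IsSink φ A B (V ∆ (B \ A)) := by
        refine ⟨hW, hW', ?_⟩
        rw [Finset.eq_empty_iff_forall_notMem] at he hs ⊢
        intro j hj
        have a := he j
        have b := hs j
        simp only [Finset.mem_inter, Finset.mem_symmDiff (s := φ V)] at a b hj
        tauto
      have hEq := hu _ hsW
      rw [hEq, symmDiff_self] at ha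
      rw [← ha] at hdim
      simp at hdim
    · intro A' B' ha hab hb hne
      refine hasUniqueSink_of_pairs hab ?_
      intro U V hU hU' hV hV' hUV
      refine h1 U V (ha.trans hU) (hU'.trans hb) (ha.trans hV) (hV'.trans hb) hUV ?_
      -- Antipodal vertices of `[A,B]` lie in no common proper face.
      intro hanti
      apply hne
      have key : ∀ j, j ∈ U ∆ V ↔ j ∈ B \ A := fun j => by rw [hanti]
      simp only [Finset.mem_symmDiff, Finset.mem_sdiff] at key
      constructor
      · ext j
        have := key j
        grind
      · ext j
        have := key j
        grind
end

section
/- Let n ≥ 2 and let ψ be an outmap (mapping subsets of {1,…,n−1} to subsets of {1,…,n−1}) that is a USO of the full face [∅,{1,…,n−1}] of the standard (n−1)-cube. For i ∈ {0,1} define the outmap φ_i on the standard n-cube by: for V ⊆ {1,…,n−1}, φ_i(V) = ψ(V) if |ψ(V)| ≡ i (mod 2) and φ_i(V) = ψ(V) ∪ {n} otherwise; and for V with n ∈ V, φ_i(V) = φ_i({1,…,n} \ V). Then whenever φ is an outmap on the standard n-cube that is a PUSO of the full face [∅,{1,…,n}] and satisfies φ(V) ∩ {1,…,n−1} = ψ(V)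 for all V ⊆ {1,…,n−1}, φ agrees with φ_0 or with φ_1 on all subsets of {1,…,n} (up to the values on the carrier {1,…,n}). -/
/-!
For a face `[A,B]` with carrier `C = B \ A` and `S ⊆ C`, let `N(A,B,S)` be the number of vertices of
the face whose outmap, restricted to `C`, equals `S` (`outCount`). Splitting the face along a
coordinate `j ∈ C` into its two facets gives, for `j ∉ S`,
`N(A,B,S) + N(A,B,S ∪ {j}) = N(A ∪ {j},B,S) + N(A,B \ {j},S)` (`outCount_split`).

If all faces of `[A,B]` have a unique sink, induction on the dimension and on `S`, starting from
`N(A,B,∅) = 1`, yields `N(A,B,S) = 1` for all `S` (`outCount_eq_one`). For a PUSO of the whole cube,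
the facets are USOs, so `N(S) + N(S ∪ {j}) = 2`, while `N(∅) ≠ 1`. Hence `N(∅)` is `0` or `2`, and
`N(S)` alternates between `0` and `2` with the parity of `|S|` (`outCount_puso`). Two consequences
determine a PUSO from one facet:

* all outmap values have the same parity, which fixes whether `n` lies in `φ V`;
* every outmap value is attained exactly twice. The two vertices attaining it must be antipodal,
  for otherwise they would share a facet, on which the restricted outmap is injective
  (`puso_antipodal`).
-/

open Finset
open scoped symmDiff

/-- Auxiliary map for extending an outmap `ψ` of the `(n-1)`-cube to the
`n`-cube: keep `ψ V` if `|ψ V|` has parity `i`, otherwise add coordinate `n`. -/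
def phiExtAux (n i : ℕ) (ψ : Finset ℕ → Finset ℕ) (V : Finset ℕ) : Finset ℕ :=
  if (ψ V).card % 2 = i % 2 then ψ V else ψ V ∪ {n}

/-- The two candidate extensions `φ_i` (i = 0, 1) of a USO `ψ` of the facet
`[∅,{1,…,n-1}]` to the standard `n`-cube: on the facet use `phiExtAux`, and for
vertices containing `n` copy the value of the antipodal vertex. -/
def phiExt (n i : ℕ) (ψ : Finset ℕ → Finset ℕ) (V : Finset ℕ) : Finset ℕ :=
  if n ∈ V then phiExtAux n i ψ (Finset.Icc 1 n \ V) else phiExtAux n i ψ V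

/-- The number of vertices of the face `[A,B]` whose outmap, restricted to the carrier `B \ A`,
is `S`. -/
def outCount (φ : Finset ℕ → Finset ℕ) (A B S : Finset ℕ) : ℕ :=
  ((Finset.Icc A B).filter (fun V => φ V ∩ (B \ A) = S)).card

theorem outCount_empty_eq_one_iff (φ : Finset ℕ → Finset ℕ) (A B : Finset ℕ) :
    outCount φ A B ∅ = 1 ↔ HasUniqueSink φ A B := by
  unfold outCount HasUniqueSink
  rw [Finset.card_eq_one, Finset.singleton_iff_unique_mem]
  simp [IsSink, and_assoc]

/-- Splitting a face along the coordinate `j` of its carrier: both sides count the vertices whose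
outmap agrees with `S` on the carrier without `j`. -/
theorem outCount_split (φ : Finset ℕ → Finset ℕ) {A B S : Finset ℕ} {j : ℕ}
    (hjB : j ∈ B) (hjA : j ∉ A) (hjS : j ∉ S) :
    outCount φ A B S + outCount φ A B (insert j S) =
      outCount φ (insert j A) B S + outCount φ A (B.erase j) S := by
  unfold outCount
  rw [← Finset.card_union_of_disjoint, ← Finset.card_union_of_disjoint]
  · congr 1
    ext V
    simp only [Finset.mem_union, Finset.mem_filter, Finset.mem_Icc, Finset.ext_iff, Finset.subset_iff, Finset.mem_inter, Finset.mem_sdiff, Finset.mem_insert,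
      Finset.mem_erase]
    constructor
    · rintro (⟨⟨h1, h2⟩, h3⟩ | ⟨⟨h1, h2⟩, h3⟩) <;> by_cases hjV : j ∈ V
      · left; grind
      · right; grind
      · left; grind
      · right; grind
    · rintro (⟨⟨h1, h2⟩, h3⟩ | ⟨⟨h1, h2⟩, h3⟩) <;> by_cases hj : j ∈ φ V
      · right; grind
      · left; grind
      · right; grind
      · left; grind
  · rw [Finset.disjoint_left]
    intro V h1 h2
    simp only [Finset.mem_filter, Finset.mem_Icc] at h1 h2
    exact Finset.notMem_erase j B (h2.1.2 (h1.1.1 (Finset.mem_insert_self j A)))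
  · rw [Finset.disjoint_left]
    intro V h1 h2
    simp only [Finset.mem_filter] at h1 h2
    exact hjS (by rw [← h1.2, h2.2]; exact Finset.mem_insert_self j S)

/-- The restricted outmap of a USO is a bijection from the face to the subsets of its carrier. -/
theorem outCount_eq_one (φ : Finset ℕ → Finset ℕ) (k : ℕ) :
    ∀ A B : Finset ℕ, IsUSO φ A B → (B \ A).card = k →
      ∀ S, S ⊆ B \ A → outCount φ A B S = 1 := by
  induction k with
  | zero =>
    intro A B h hk S hS
    rw [Finset.card_eq_zero] at hk
    rw [hk, Finset.subset_empty] at hS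
    rw [hS, outCount_empty_eq_one_iff]
    exact h.2 A B subset_rfl h.1 subset_rfl
  | succ k ih =>
    intro A B h hk S
    induction S using Finset.induction_on with
    | empty =>
      intro _
      rw [outCount_empty_eq_one_iff]
      exact h.2 A B subset_rfl h.1 subset_rfl
    | insert j S hj ihS =>
      intro hS
      obtain ⟨hjBA, hS'⟩ := Finset.insert_subset_iff.mp hS
      obtain ⟨hjB, hjA⟩ := Finset.mem_sdiff.mp hjBA
      have e1 : B \ insert j A = (B \ A).erase j := by grind
      have e2 : B.erase j \ A = (B \ A).erase j := by grind
      have hc : ((B \ A).erase j).card = k := by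
        rw [Finset.card_erase_of_mem hjBA, hk]; rfl
      have hSj : S ⊆ (B \ A).erase j := Finset.subset_erase.mpr ⟨hS', hj⟩
      have u1 : outCount φ (insert j A) B S = 1 :=
        ih _ _ ⟨Finset.insert_subset hjB h.1, fun A' B' a b c =>
          h.2 A' B' ((Finset.subset_insert j A).trans a) b c⟩ (by rw [e1, hc]) S (by rwa [e1])
      have u2 : outCount φ A (B.erase j) S = 1 :=
        ih _ _ ⟨Finset.subset_erase.mpr ⟨h.1, hjA⟩, fun A' B' a b c =>
          h.2 A' B' a b (c.trans (Finset.erase_subset j B))⟩ (by rw [e2, hc]) S (by rwa [e2])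
      have := outCount_split φ hjB hjA hj
      have := ihS hS'
      omega

/-- Both facets of a PUSO orthogonal to the coordinate `j` are USOs. -/
theorem puso_facets {φ : Finset ℕ → Finset ℕ} {E : Finset ℕ} (h : IsPUSO φ ∅ E) {j : ℕ}
    (hj : j ∈ E) : IsUSO φ {j} E ∧ IsUSO φ ∅ (E.erase j) := by
  refine ⟨⟨by simpa using hj, fun A' B' a b c => h.2.2 A' B' (by simp) b c ?_⟩,
    ⟨by simp, fun A' B' a b c => h.2.2 A' B' a b (c.trans (Finset.erase_subset j E)) ?_⟩⟩
  · rintro ⟨rfl, -⟩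
    simp at a
  · rintro ⟨-, rfl⟩
    exact Finset.notMem_erase j B' (c hj)

/-- On a PUSO of a nonempty cube, the outmap values of one parity are attained twice and those of
the other parity are not attained. -/
theorem outCount_puso {φ : Finset ℕ → Finset ℕ} {E : Finset ℕ} (h : IsPUSO φ ∅ E)
    (hE : E.Nonempty) :
    ∃ i < 2, ∀ S ⊆ E, outCount φ ∅ E S = if S.card % 2 = i then 2 else 0 := by
  have step : ∀ (S : Finset ℕ) (j : ℕ), S ⊆ E → j ∈ E → j ∉ S →
      outCount φ ∅ E S + outCount φ ∅ E (insert j S) = 2 := by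
    intro S j hS hj hjS
    obtain ⟨f1, f2⟩ := puso_facets h hj
    rw [outCount_split φ hj (by simp) hjS,
      outCount_eq_one φ _ _ _ (by simpa using f1) rfl S (by grind),
      outCount_eq_one φ _ _ _ f2 rfl S (by grind)]
  have h0 : outCount φ ∅ E ∅ ≠ 1 := fun h1 => h.2.1 ((outCount_empty_eq_one_iff φ ∅ E).mp h1)
  obtain ⟨j₀, hj₀⟩ := hE
  have hj := step ∅ j₀ (by simp) hj₀ (by simp)
  refine ⟨if outCount φ ∅ E ∅ = 2 then 0 else 1, by split_ifs <;> omega, fun S => ?_⟩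
  induction S using Finset.induction_on with
  | empty =>
    intro _
    rw [Finset.card_empty]
    by_cases h2 : outCount φ ∅ E ∅ = 2
    · simp [h2]
    · simp [h2]
      omega
  | insert j S hjS ih =>
    intro hS
    obtain ⟨hjE, hSE⟩ := Finset.insert_subset_iff.mp hS
    have h1 := step S j hSE hjE hjS
    have h2 := ih hSE
    rw [Finset.card_insert_of_notMem hjS]
    split_ifs at h2 ⊢ <;> omega

/-- Antipodal vertices of a PUSO have the same outmap value. -/
theorem puso_antipodal {φ : Finset ℕ → Finset ℕ} {E : Finset ℕ} (h : IsPUSO φ ∅ E)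
    (hE : E.Nonempty) {V : Finset ℕ} (hV : V ⊆ E) : φ (E \ V) ∩ E = φ V ∩ E := by
  obtain ⟨i, -, hi⟩ := outCount_puso h hE
  have hVmem : V ∈ (Finset.Icc ∅ E).filter (fun W => φ W ∩ (E \ ∅) = φ V ∩ E) := by
    simpa using hV
  have hcount := hi (φ V ∩ E) Finset.inter_subset_right
  have hpos : 0 < outCount φ ∅ E (φ V ∩ E) := Finset.card_pos.mpr ⟨V, hVmem⟩
  have h1 : 1 < outCount φ ∅ E (φ V ∩ E) := by split_ifs at hcount <;> omega
  obtain ⟨W, hWmem, hne⟩ := Finset.exists_mem_ne h1 V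
  obtain ⟨hWE, hW⟩ : W ⊆ E ∧ φ W ∩ E = φ V ∩ E := by simpa using hWmem
  -- A USO face cannot contain both `V` and `W`.
  have key : ∀ A B : Finset ℕ, IsUSO φ A B → A ⊆ V → A ⊆ W → V ⊆ B → W ⊆ B → B ⊆ E → False := by
    intro A B hU a b c d e
    have h1 := outCount_eq_one φ _ A B hU rfl (φ V ∩ (B \ A)) Finset.inter_subset_right
    have hWV : φ W ∩ (B \ A) = φ V ∩ (B \ A) := by
      ext x
      have := Finset.ext_iff.mp hW x
      simp only [Finset.mem_inter, Finset.mem_sdiff] at this ⊢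
      constructor <;> rintro ⟨p, q, r⟩ <;> have := e q <;> tauto
    exact hne (Finset.card_le_one.mp h1.le W (by simp [b, d, hWV]) V (by simp [a, c]))
  have hWV : W = E \ V := by
    ext x
    rw [Finset.mem_sdiff]
    constructor
    · intro hx
      refine ⟨hWE hx, fun hxV => ?_⟩
      exact key {x} E (puso_facets h (hV hxV)).1 (by simpa) (by simpa) hV hWE subset_rfl
    · rintro ⟨hx, hxV⟩
      by_contra hxW
      exact key ∅ (E.erase x) (puso_facets h hx).2 (by simp) (by simp)
        (Finset.subset_erase.mpr ⟨hV, hxV⟩) (Finset.subset_erase.mpr ⟨hWE, hxW⟩)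
        (Finset.erase_subset x E)
  rw [← hWV, hW]

/-- Any PUSO of the full face of the standard `n`-cube extending a USO `ψ` of
the facet `[∅,{1,…,n-1}]` agrees (within the carrier `{1,…,n}`) with one of the
two canonical candidates `φ_0`, `φ_1`. -/
theorem puso_extension_candidates (n : ℕ) (hn : 2 ≤ n)
    (ψ : Finset ℕ → Finset ℕ)
    (hψr : ∀ V : Finset ℕ, V ⊆ Finset.Icc 1 (n - 1) → ψ V ⊆ Finset.Icc 1 (n - 1))
    (hψ : IsUSO ψ ∅ (Finset.Icc 1 (n - 1)))
    (φ : Finset ℕ → Finset ℕ)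
    (hφ : IsPUSO φ ∅ (Finset.Icc 1 n))
    (hagree : ∀ V : Finset ℕ, V ⊆ Finset.Icc 1 (n - 1) →
      φ V ∩ Finset.Icc 1 (n - 1) = ψ V) :
    (∀ V : Finset ℕ, V ⊆ Finset.Icc 1 n →
        φ V ∩ Finset.Icc 1 n = phiExt n 0 ψ V ∩ Finset.Icc 1 n) ∨
    (∀ V : Finset ℕ, V ⊆ Finset.Icc 1 n →
        φ V ∩ Finset.Icc 1 n = phiExt n 1 ψ V ∩ Finset.Icc 1 n) := by
  have hE : (Finset.Icc 1 n).Nonempty := ⟨n, by simp; omega⟩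
  obtain ⟨i, hi2, hi⟩ := outCount_puso hφ hE
  have parity : ∀ V, V ⊆ Finset.Icc 1 n → (φ V ∩ Finset.Icc 1 n).card % 2 = i := by
    intro V hV
    by_contra hne
    have h0 := hi (φ V ∩ Finset.Icc 1 n) Finset.inter_subset_right
    rw [if_neg hne] at h0
    have hVmem : V ∈ (Finset.Icc ∅ (Finset.Icc 1 n)).filter
        (fun W => φ W ∩ (Finset.Icc 1 n \ ∅) = φ V ∩ Finset.Icc 1 n) := by simpa using hV
    rw [Finset.card_eq_zero.mp h0] at hVmem
    simp at hVmem
  have hins : Finset.Icc 1 n = insert n (Finset.Icc 1 (n - 1)) := by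
    ext x; simp only [Finset.mem_Icc, Finset.mem_insert]; omega
  have hnot : n ∉ Finset.Icc 1 (n - 1) := by simp; omega
  have lower : ∀ V, V ⊆ Finset.Icc 1 (n - 1) →
      φ V ∩ Finset.Icc 1 n = phiExtAux n i ψ V ∩ Finset.Icc 1 n := by
    intro V hV
    have hp := parity V (hV.trans (by rw [hins]; exact Finset.subset_insert _ _))
    have hψV := hψr V hV
    have hnψ : n ∉ ψ V := fun h => hnot (hψV h)
    have hag := hagree V hV
    by_cases hn' : n ∈ φ V
    · have e : φ V ∩ Finset.Icc 1 n = insert n (ψ V) := by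
        rw [hins, Finset.inter_insert_of_mem hn', hag]
      rw [e, Finset.card_insert_of_notMem hnψ] at hp
      rw [e, phiExtAux, if_neg (by omega)]
      grind
    · have e : φ V ∩ Finset.Icc 1 n = ψ V := by
        rw [hins, Finset.inter_insert_of_notMem hn', hag]
      rw [e] at hp
      rw [e, phiExtAux, if_pos (by omega)]
      grind
  have main : ∀ V, V ⊆ Finset.Icc 1 n →
      φ V ∩ Finset.Icc 1 n = phiExt n i ψ V ∩ Finset.Icc 1 n := by
    intro V hV
    unfold phiExt
    split_ifs with hnV
    · rw [← puso_antipodal hφ hE hV]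
      exact lower _ (by grind)
    · exact lower V (by grind)
  interval_cases i
  · exact Or.inl main
  · exact Or.inr main
end
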